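/- Let k, N be natural numbers with 2 ≤ k < N and n := N − k ≥ 1, and fix distinct indices i, j ∈ {1, …, k}. Then in Λ(V): (∧_{m ∈ {1,…,k} \ {i,j}} ∧_{l=1}^{n} (ψ_l^m ∧ ψ̄_l^m)) ∧ (ω^{ii} ∧ ω^{jj})^{n−1} ∧ ω^{ij} ∧ ω^{ji} = −n · ((n−1)!)² · T. -/

import Mathlib

noncomputable section

/-- The real vector space with basis `ψ_s^j` (inl) and `ψ̄_s^j` (inr),
    `1 ≤ s ≤ n`, `1 ≤ j ≤ k`. -/
abbrev V (k n : ℕ) : Type := ((Fin n × Fin k) ⊕ (Fin n × Fin k)) → ℝ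

/-- The fermionic variable `ψ_s^j` as a degree-1 element of the exterior algebra. -/
def ψ (k n : ℕ) (s : Fin n) (j : Fin k) : ExteriorAlgebra ℝ (V k n) :=
  ExteriorAlgebra.ι ℝ (Pi.single (Sum.inl (s, j)) (1 : ℝ))

/-- The fermionic variable `ψ̄_s^j` as a degree-1 element of the exterior algebra. -/
def ψb (k n : ℕ) (s : Fin n) (j : Fin k) : ExteriorAlgebra ℝ (V k n) :=
  ExteriorAlgebra.ι ℝ (Pi.single (Sum.inr (s, j)) (1 : ℝ))

/-- `ω^{ij} = ∑_{s=1}^n ψ_s^i ∧ ψ̄_s^j`. -/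
def ω (k n : ℕ) (i j : Fin k) : ExteriorAlgebra ℝ (V k n) :=
  ∑ s : Fin n, ψ k n s i * ψb k n s j

/-- `tr Φ = ∑_{i=1}^k ω^{ii}`. -/
def trPhi (k n : ℕ) : ExteriorAlgebra ℝ (V k n) :=
  ∑ i : Fin k, ω k n i i

/-- `tr(Φ²) = ∑_{i,j=1}^k ω^{ij} ∧ ω^{ji}`. -/
def trPhi2 (k n : ℕ) : ExteriorAlgebra ℝ (V k n) :=
  ∑ i : Fin k, ∑ j : Fin k, ω k n i j * ω k n j i

/-- The top-degree generator `T = ∧_{s=1}^n (ψ_s^1 ∧ ψ̄_s^1 ∧ ⋯ ∧ ψ_s^k ∧ ψ̄_s^k)`. -/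
def T (k n : ℕ) : ExteriorAlgebra ℝ (V k n) :=
  ((List.finRange n).map (fun s =>
    ((List.finRange k).map (fun j => ψ k n s j * ψb k n s j)).prod)).prod

/-!
The products `ψ_s^a ∧ ψ̄_s^b` have even degree, so they lie in the centre of the exterior algebra,
which is a commutative ring, and they satisfy
`(ψ_s^i ∧ ψ̄_s^j) ∧ (ψ_s^j ∧ ψ̄_s^i) = -(ψ_s^i ∧ ψ̄_s^i) ∧ (ψ_s^j ∧ ψ̄_s^j)`. In the expansion of
`ω^{ij} ∧ ω^{ji}` the term `(ψ_s^i ∧ ψ̄_s^j) ∧ (ψ_t^j ∧ ψ̄_t^i)` annihilates the summands with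
index `s` or `t` of `ω^{ii}` and `ω^{jj}`. The factor `(ω^{ii} ∧ ω^{jj})^{n-1}` then has to use each
of the `n - 1` summands with index different from `s` exactly once, both for `ω^{ii}` and for
`ω^{jj}`, which happens in `((n-1)!)²` ways. If `s ≠ t` this includes the index `t`, so the term
vanishes; each of the `n` terms with `s = t` contributes `-((n-1)!)²` times the top form.
-/

section SquareZero

open Finset
open scoped Nat

variable {A ι : Type*}

section CommSemiring

variable [CommSemiring A]

theorem add_pow_of_sq_eq_zero (x : A) {y : A} (hy : y ^ 2 = 0) (m : ℕ) :
    (x + y) ^ m = x ^ m + m * x ^ (m - 1) * y := by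
  simpa only [Polynomial.eval_pow, Polynomial.eval_X, Polynomial.derivative_X_pow,
    Polynomial.eval_mul, Polynomial.eval_C] using
    Polynomial.eval_add_of_sq_eq_zero (Polynomial.X ^ m) x y hy

theorem prod_mul_sum_eq_zero_of_sq_eq_zero {S : Finset ι} {p : ι → A}
    (hp : ∀ s ∈ S, p s ^ 2 = 0) : (∏ s ∈ S, p s) * ∑ s ∈ S, p s = 0 := by
  classical
  rw [mul_sum]
  refine sum_eq_zero fun s hs => ?_
  rw [← prod_erase_mul S p hs, mul_assoc, ← sq, hp s hs, mul_zero]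

theorem sum_pow_card_of_sq_eq_zero {S : Finset ι} {p : ι → A} (hp : ∀ s ∈ S, p s ^ 2 = 0) :
    (∑ s ∈ S, p s) ^ #S = (#S)! * ∏ s ∈ S, p s := by
  classical
  induction S using Finset.induction_on with
  | empty => simp
  | insert a S ha ih =>
    obtain ⟨hpa, hpS⟩ := forall_mem_insert .. |>.mp hp
    have sum_pow_succ : (∑ s ∈ S, p s) ^ (#S + 1) = 0 := by
      rw [pow_succ, ih hpS, mul_assoc, prod_mul_sum_eq_zero_of_sq_eq_zero hpS, mul_zero]
    rw [sum_insert ha, prod_insert ha, card_insert_of_notMem ha, add_comm (p a),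
      add_pow_of_sq_eq_zero _ hpa, sum_pow_succ, Nat.add_sub_cancel, ih hpS, Nat.factorial_succ]
    push_cast
    ring

theorem mul_sum_pow_card_sub_one [DecidableEq ι] {S : Finset ι} {p : ι → A}
    (hp : ∀ s ∈ S, p s ^ 2 = 0) {a : ι} (ha : a ∈ S) {y : A} (hy : y * p a = 0) :
    y * (∑ s ∈ S, p s) ^ (#S - 1) = (#S - 1)! * (y * ∏ s ∈ S.erase a, p s) := by
  have drop_summand (m : ℕ) : y * (∑ s ∈ S, p s) ^ m = y * (∑ s ∈ S.erase a, p s) ^ m := by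
    rw [← sum_erase_add S p ha, add_pow_of_sq_eq_zero _ (hp a ha), mul_add, mul_left_comm, hy,
      mul_zero, add_zero]
  rw [drop_summand, ← card_erase_of_mem ha,
    sum_pow_card_of_sq_eq_zero fun s hs => hp s (mem_of_mem_erase hs), mul_left_comm]

theorem mul_sum_mul_sum_pow_card_sub_one [DecidableEq ι] {S : Finset ι} {p q : ι → A}
    (hp : ∀ s ∈ S, p s ^ 2 = 0) (hq : ∀ s ∈ S, q s ^ 2 = 0) {a : ι} (ha : a ∈ S) {y : A}
    (hyp : y * p a = 0) (hyq : y * q a = 0) :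
    y * ((∑ s ∈ S, p s) * ∑ s ∈ S, q s) ^ (#S - 1) =
      (#S - 1)! ^ 2 * (y * ((∏ s ∈ S.erase a, p s) * ∏ s ∈ S.erase a, q s)) := by
  calc y * ((∑ s ∈ S, p s) * ∑ s ∈ S, q s) ^ (#S - 1)
      = y * (∑ s ∈ S, p s) ^ (#S - 1) * (∑ s ∈ S, q s) ^ (#S - 1) := by
        rw [mul_pow, mul_assoc]
    _ = (#S - 1)! * (∏ s ∈ S.erase a, p s) * (y * (∑ s ∈ S, q s) ^ (#S - 1)) := by
        rw [mul_sum_pow_card_sub_one hp ha hyp]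
        ring
    _ = (#S - 1)! ^ 2 * (y * ((∏ s ∈ S.erase a, p s) * ∏ s ∈ S.erase a, q s)) := by
        rw [mul_sum_pow_card_sub_one hq ha hyq]
        ring

end CommSemiring

theorem sum_mul_sum_pow_card_sub_one_mul_sum_mul_sum [CommRing A] {S : Finset ι}
    {p q u v : ι → A} (hp : ∀ s ∈ S, p s ^ 2 = 0) (hq : ∀ s ∈ S, q s ^ 2 = 0)
    (hup : ∀ s ∈ S, u s * p s = 0) (huq : ∀ s ∈ S, u s * q s = 0)
    (hvp : ∀ s ∈ S, v s * p s = 0) (huv : ∀ s ∈ S, u s * v s = -(p s * q s)) :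
    ((∑ s ∈ S, p s) * ∑ s ∈ S, q s) ^ (#S - 1) * (∑ s ∈ S, u s) * ∑ s ∈ S, v s =
      -(#S : A) * (#S - 1)! ^ 2 * ((∏ s ∈ S, p s) * ∏ s ∈ S, q s) := by
  classical
  set W := ((∑ s ∈ S, p s) * ∑ s ∈ S, q s) ^ (#S - 1)
  have eval_mul {a : ι} (ha : a ∈ S) (b : ι) : u a * v b * W =
      (#S - 1)! ^ 2 * (u a * v b * ((∏ s ∈ S.erase a, p s) * ∏ s ∈ S.erase a, q s)) :=
    mul_sum_mul_sum_pow_card_sub_one hp hq ha (by rw [mul_right_comm, hup a ha, zero_mul])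
      (by rw [mul_right_comm, huq a ha, zero_mul])
  have diagonal : ∀ a ∈ S,
      u a * v a * W = -((#S - 1)! ^ 2 * ((∏ s ∈ S, p s) * ∏ s ∈ S, q s)) := by
    intro a ha
    rw [eval_mul ha, huv a ha, ← mul_prod_erase S p ha, ← mul_prod_erase S q ha]
    ring
  have off_diagonal : ∀ a ∈ S, ∀ b ∈ S, b ≠ a → u a * v b * W = 0 := by
    intro a ha b hb hba
    rw [eval_mul ha, ← mul_prod_erase (S.erase a) p (mem_erase.mpr ⟨hba, hb⟩)]
    linear_combination (#S - 1)! ^ 2 * u a * (∏ s ∈ (S.erase a).erase b, p s) *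
      (∏ s ∈ S.erase a, q s) * hvp b hb
  calc W * (∑ s ∈ S, u s) * ∑ s ∈ S, v s
      = ∑ a ∈ S, ∑ b ∈ S, u a * v b * W := by
        rw [mul_assoc, mul_comm, sum_mul_sum, sum_mul]
        simp only [sum_mul]
    _ = ∑ a ∈ S, u a * v a * W :=
        sum_congr rfl fun a ha => sum_eq_single_of_mem a ha (off_diagonal a ha)
    _ = -(#S : A) * (#S - 1)! ^ 2 * ((∏ s ∈ S, p s) * ∏ s ∈ S, q s) := by
        rw [sum_congr rfl diagonal, sum_const, nsmul_eq_mul]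
        ring

theorem prod_compl_pair_mul_sum_mul_sum_pow_mul_sum_mul_sum [CommRing A] {τ : Type*}
    [Fintype ι] [Fintype τ] [DecidableEq τ] {x : ι → τ → τ → A}
    (same_left : ∀ s a b c, x s a b * x s a c = 0) (same_right : ∀ s a b c, x s a c * x s b c = 0)
    (exchange : ∀ s a b, x s a b * x s b a = -(x s a a * x s b b)) {i j : τ} (hij : i ≠ j) :
    (∏ m ∈ {i, j}ᶜ, ∏ s, x s m m) *
        ((∑ s, x s i i) * ∑ s, x s j j) ^ (Fintype.card ι - 1) *
        (∑ s, x s i j) * (∑ s, x s j i) =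
      -(Fintype.card ι : A) * (Fintype.card ι - 1)! ^ 2 * ∏ s, ∏ m, x s m m := by
  have mixed_term := sum_mul_sum_pow_card_sub_one_mul_sum_mul_sum (S := univ)
    (fun s _ => (sq _).trans (same_left s i i i)) (fun s _ => (sq _).trans (same_left s j j j))
    (fun s _ => same_left s i j i) (fun s _ => same_right s i j j)
    (fun s _ => same_right s j i i) (fun s _ => exchange s i j)
  have prod_eq : ∏ s, ∏ m, x s m m =
      (∏ m ∈ {i, j}ᶜ, ∏ s, x s m m) * ((∏ s, x s i i) * ∏ s, x s j j) := by
    rw [prod_comm, ← prod_compl_mul_prod {i, j}, prod_pair hij]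
  rw [card_univ] at mixed_term
  rw [prod_eq]
  linear_combination (∏ m ∈ {i, j}ᶜ, ∏ s, x s m m) * mixed_term

end SquareZero

section WedgePair

open ExteriorAlgebra
open scoped Nat

variable (R : Type*) [CommRing R] {M : Type*} [AddCommGroup M] [Module R M]

theorem ι_mul_ι_swap (v w : M) : ι R v * ι R w = -(ι R w * ι R v) :=
  eq_neg_of_add_eq_zero_left (ι_add_mul_swap v w)

theorem ι_mul_ι_mem_center (v w : M) :
    ι R v * ι R w ∈ Subring.center (ExteriorAlgebra R M) := by
  rw [Subring.mem_center_iff]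
  intro y
  induction y using ExteriorAlgebra.induction with
  | algebraMap r => exact Algebra.commutes r _
  | ι x =>
    calc ι R x * (ι R v * ι R w) = -(ι R v * (ι R x * ι R w)) := by
          rw [← mul_assoc, ι_mul_ι_swap R x v, neg_mul, mul_assoc]
      _ = ι R v * ι R w * ι R x := by
          rw [ι_mul_ι_swap R x w, mul_neg, neg_neg, mul_assoc]
  | mul y z hy hz => exact Commute.mul_left hy hz
  | add y z hy hz => exact Commute.add_left hy hz

/-- The wedge product `v ∧ w` of two vectors, as an element of the centre of the exterior algebra.
Bundling the centrality lets products of such elements be computed in a commutative ring. -/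
def wedgePair (v w : M) : Subring.center (ExteriorAlgebra R M) :=
  ⟨ι R v * ι R w, ι_mul_ι_mem_center R v w⟩

theorem center_subtype_wedgePair (v w : M) :
    (Subring.center (ExteriorAlgebra R M)).subtype (wedgePair R v w) = ι R v * ι R w :=
  rfl

theorem coe_wedgePair_mul_wedgePair (v w v' w' : M) :
    (wedgePair R v w * wedgePair R v' w' : ExteriorAlgebra R M) =
      -(ι R v * ι R v' * (ι R w * ι R w')) := by
  calc ι R v * ι R w * (ι R v' * ι R w') = ι R v * (ι R w * ι R v') * ι R w' := by
        simp only [mul_assoc]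
    _ = -(ι R v * ι R v' * (ι R w * ι R w')) := by
        rw [ι_mul_ι_swap R w v']
        simp only [mul_neg, neg_mul, mul_assoc]

theorem wedgePair_mul_wedgePair_same_left (v w w' : M) :
    wedgePair R v w * wedgePair R v w' = 0 :=
  Subtype.ext <| (coe_wedgePair_mul_wedgePair R v w v w').trans <| by
    rw [ι_sq_zero, zero_mul, neg_zero, ZeroMemClass.coe_zero]

theorem wedgePair_mul_wedgePair_same_right (v v' w : M) :
    wedgePair R v w * wedgePair R v' w = 0 :=
  Subtype.ext <| (coe_wedgePair_mul_wedgePair R v w v' w).trans <| by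
    rw [ι_sq_zero, mul_zero, neg_zero, ZeroMemClass.coe_zero]

theorem wedgePair_mul_wedgePair_exchange (v w v' w' : M) :
    wedgePair R v w' * wedgePair R v' w = -(wedgePair R v w * wedgePair R v' w') := by
  refine Subtype.ext ?_
  calc (wedgePair R v w' * wedgePair R v' w : ExteriorAlgebra R M)
      = -(ι R v * ι R v' * (ι R w' * ι R w)) := coe_wedgePair_mul_wedgePair R v w' v' w
    _ = -(-(ι R v * ι R v' * (ι R w * ι R w'))) := by rw [ι_mul_ι_swap R w' w, mul_neg]
    _ = -(wedgePair R v w * wedgePair R v' w') := by rw [coe_wedgePair_mul_wedgePair]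

theorem mixed_term_eval_general {k n : ℕ} (v w : Fin n → Fin k → M) {i j : Fin k} (hij : i ≠ j) :
    (((List.finRange k).filter (fun m => m ≠ i ∧ m ≠ j)).map
        (fun m => ((List.finRange n).map (fun l => ι R (v l m) * ι R (w l m))).prod)).prod *
      ((∑ s, ι R (v s i) * ι R (w s i)) * ∑ s, ι R (v s j) * ι R (w s j)) ^ (n - 1) *
      (∑ s, ι R (v s i) * ι R (w s j)) * (∑ s, ι R (v s j) * ι R (w s i)) =
      (-(n : R) * ((n - 1)! : R) ^ 2) •
        ((List.finRange n).map (fun s =>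
          ((List.finRange k).map (fun m => ι R (v s m) * ι R (w s m))).prod)).prod := by
  have compl_pair : ({i, j} : Finset (Fin k))ᶜ =
      ((List.finRange k).filter fun m => m ≠ i ∧ m ≠ j).toFinset := by ext m; simp
  have central := prod_compl_pair_mul_sum_mul_sum_pow_mul_sum_mul_sum
    (x := fun s a b => wedgePair R (v s a) (w s b))
    (fun s a b c => wedgePair_mul_wedgePair_same_left R (v s a) (w s b) (w s c))
    (fun s a b c => wedgePair_mul_wedgePair_same_right R (v s a) (v s b) (w s c))
    (fun s a b => wedgePair_mul_wedgePair_exchange R (v s a) (w s a) (v s b) (w s b)) hij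
  rw [compl_pair, List.prod_toFinset _ ((List.nodup_finRange k).filter _)] at central
  simp only [Fin.prod_univ_def, Fintype.card_fin] at central
  simpa only [map_mul, map_pow, map_sum, map_list_prod, map_neg, map_natCast, List.map_map,
    Function.comp_def, center_subtype_wedgePair, Algebra.smul_def] using
    congrArg (Subring.center (ExteriorAlgebra R M)).subtype central

end WedgePair

/-- for distinct `i ≠ j`,
`(∧_{m∉{i,j}} ∧_{l=1}^n ψ_l^m ∧ ψ̄_l^m) ∧ (ω^{ii} ∧ ω^{jj})^{n−1} ∧ ω^{ij} ∧ ω^{ji}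
  = −n((n−1)!)² · T`. -/
theorem mixed_term_eval (k N n : ℕ) (hk : 2 ≤ k) (hN : k < N) (hn : n = N - k)
    (hn1 : 1 ≤ n) (i j : Fin k) (hij : i ≠ j) :
    (((List.finRange k).filter (fun m => m ≠ i ∧ m ≠ j)).map
        (fun m => ((List.finRange n).map (fun l => ψ k n l m * ψb k n l m)).prod)).prod *
      (ω k n i i * ω k n j j) ^ (n - 1) * ω k n i j * ω k n j i =
      (-(n : ℝ) * (((n - 1).factorial : ℝ)) ^ 2) • T k n :=
  mixed_term_eval_general ℝ (fun s a => Pi.single (Sum.inl (s, a)) 1)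
    (fun s a => Pi.single (Sum.inr (s, a)) 1) hij
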